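/- Let d be a positive integer and fix q ∈ ℝ. Then the function λ ↦ H(q; λ), defined on the open positive orthant (0, ∞)^d, has a partial derivative with respect to each coordinate λ_j at every point of (0, ∞)^d. -/

import Mathlib

open MeasureTheory ProbabilityTheory Filter

/-- The product of `d` independent standard normal distributions. -/
noncomputable def stdGaussPi (d : ℕ) : Measure (Fin d → ℝ) :=
  Measure.pi fun _ => gaussianReal 0 1

/-- `mixCDF d lam q = H(q; λ) = P(∑ j, λ_j Z_j² ≤ q)` for `Z_1, …, Z_d` IID standard normal. -/
noncomputable def mixCDF (d : ℕ) (lam : Fin d → ℝ) (q : ℝ) : ℝ :=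
  (stdGaussPi d {z | ∑ j, lam j * z j ^ 2 ≤ q}).toReal

/-!
Conditionally on the coordinates other than `j`, the event `∑ i, λ_i Z_i² ≤ q` reads `t * Z_j² ≤ u`
with `t = λ_j` and `u` independent of `Z_j`: it says that `Z_j` lies in `[-r, r]` with
`r = √(u / t)`. The Gaussian mass of this interval has `t`-derivative `-(r φ(r) + r φ(-r)) / (2t)`.
Since `x φ(x)` is bounded, the derivative is bounded uniformly in `u`, locally uniformly in `t > 0`,
so one may differentiate under the integral over the remaining coordinates.
-/

open scoped NNReal Topology

section Slice

variable {f : ℝ → ℝ} {μ : Measure ℝ} {t : ℝ}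

lemma hasDerivAt_integral_neg_self (hf : Continuous f) (r : ℝ) :
    HasDerivAt (fun r => ∫ x in -r..r, f x) (f r + f (-r)) r := by
  have primitive (b : ℝ) : HasDerivAt (fun b => ∫ x in (0 : ℝ)..b, f x) (f b) b :=
    (hf.integral_hasStrictDerivAt 0 b).hasDerivAt
  have split (b : ℝ) : ∫ x in -b..b, f x = (∫ x in (0 : ℝ)..b, f x) - ∫ x in (0 : ℝ)..-b, f x :=
    (intervalIntegral.integral_interval_sub_left (hf.intervalIntegrable _ _)
      (hf.intervalIntegrable _ _)).symm
  simp_rw [split]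
  simpa using (primitive r).fun_sub ((primitive (-r)).scomp r (hasDerivAt_neg r))

lemma hasDerivAt_sqrt_const_div (u : ℝ) (ht : 0 < t) :
    HasDerivAt (fun t => √(u / t)) (-√(u / t) / (2 * t)) t := by
  have sqrt_div_eq : (fun t => √(u / t)) =ᶠ[𝓝 t] fun t => √u / √t := by
    filter_upwards [Ioi_mem_nhds ht] with b hb using Real.sqrt_div' u (le_of_lt hb)
  have quotient_deriv :=
    (hasDerivAt_const t √u).fun_div (Real.hasDerivAt_sqrt ht.ne') (Real.sqrt_pos.2 ht).ne'
  refine (quotient_deriv.congr_of_eventuallyEq sqrt_div_eq).congr_deriv ?_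
  rw [Real.sqrt_div' u ht.le, Real.sq_sqrt ht.le]
  field_simp
  ring

lemma measureReal_Icc_eq_intervalIntegral (hf : Continuous f) (hf_nonneg : 0 ≤ f)
    (hμ : μ = volume.withDensity fun x => ENNReal.ofReal (f x)) {a b : ℝ} (hab : a ≤ b) :
    μ.real (Set.Icc a b) = ∫ x in a..b, f x := by
  rw [intervalIntegral.integral_of_le hab, ← integral_Icc_eq_integral_Ioc, measureReal_def, hμ,
    withDensity_apply _ measurableSet_Icc, integral_eq_lintegral_of_nonneg_ae
      (Eventually.of_forall hf_nonneg) hf.aestronglyMeasurable]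

lemma measureReal_mul_sq_le (hf : Continuous f) (hf_nonneg : 0 ≤ f)
    (hμ : μ = volume.withDensity fun x => ENNReal.ofReal (f x)) (ht : 0 < t) (u : ℝ) :
    μ.real {x | t * x ^ 2 ≤ u} = ∫ x in -√(u / t)..√(u / t), f x := by
  rcases lt_or_ge u 0 with hu | hu
  · have empty : {x : ℝ | t * x ^ 2 ≤ u} = ∅ :=
      Set.eq_empty_of_forall_notMem fun x hx => (hu.trans_le (by positivity)).not_ge hx
    have radius_eq_zero : √(u / t) = 0 :=
      Real.sqrt_eq_zero_of_nonpos (div_nonpos_of_nonpos_of_nonneg hu.le ht.le)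
    simp [empty, radius_eq_zero]
  · have interval : {x : ℝ | t * x ^ 2 ≤ u} = Set.Icc (-√(u / t)) √(u / t) := by
      ext x
      rw [Set.mem_ofPred_eq, Set.mem_Icc, ← Real.sq_le (div_nonneg hu ht.le), le_div_iff₀' ht]
    rw [interval, measureReal_Icc_eq_intervalIntegral hf hf_nonneg hμ
      (neg_le_self (Real.sqrt_nonneg _))]

lemma hasDerivAt_measureReal_mul_sq_le (hf : Continuous f) (hf_nonneg : 0 ≤ f)
    (hμ : μ = volume.withDensity fun x => ENNReal.ofReal (f x)) (ht : 0 < t) (u : ℝ) :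
    HasDerivAt (fun t => μ.real {x | t * x ^ 2 ≤ u})
      ((f √(u / t) + f (-√(u / t))) * (-√(u / t) / (2 * t))) t := by
  have integral_deriv :=
    (hasDerivAt_integral_neg_self hf √(u / t)).comp t (hasDerivAt_sqrt_const_div u ht)
  refine integral_deriv.congr_of_eventuallyEq ?_
  filter_upwards [Ioi_mem_nhds ht] with b hb using measureReal_mul_sq_le hf hf_nonneg hμ hb u

lemma norm_add_neg_mul_div_le {C a : ℝ} (hC : ∀ x, |x * f x| ≤ C) (ha : 0 < a) (hat : a ≤ t)
    (r : ℝ) : ‖(f r + f (-r)) * (-r / (2 * t))‖ ≤ C / a := by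
  have ht : 0 < t := ha.trans_le hat
  have hC_nonneg : 0 ≤ C := (abs_nonneg _).trans (hC 0)
  calc ‖(f r + f (-r)) * (-r / (2 * t))‖ = |-r * f (-r) - r * f r| / (2 * t) := by
        rw [← abs_of_pos (by positivity : 0 < 2 * t), ← abs_div, Real.norm_eq_abs,
          abs_of_pos (by positivity : 0 < 2 * t)]
        ring_nf
    _ ≤ (C + C) / (2 * t) := by
        gcongr
        exact (abs_sub _ _).trans (add_le_add (hC _) (hC _))
    _ = C / t := by ring
    _ ≤ C / a := by gcongr

end Slice

section Product

variable {Y : Type*} [MeasurableSpace Y] {μ : Measure ℝ} {ν : Measure Y} {u : Y → ℝ}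

lemma measurableSet_mul_sq_le (hu : Measurable u) (t : ℝ) :
    MeasurableSet {p : ℝ × Y | t * p.1 ^ 2 ≤ u p.2} :=
  measurableSet_le (by fun_prop) (by fun_prop)

lemma measureReal_prod_mul_sq_le [IsFiniteMeasure μ] [SFinite ν] (hu : Measurable u) (t : ℝ) :
    (μ.prod ν).real {p | t * p.1 ^ 2 ≤ u p.2} = ∫ y, μ.real {x | t * x ^ 2 ≤ u y} ∂ν := by
  have event_measurable := measurableSet_mul_sq_le hu t
  rw [measureReal_def, Measure.prod_apply_symm event_measurable]
  exact (integral_toReal (measurable_measure_prodMk_right event_measurable).aemeasurable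
    (Eventually.of_forall fun _ => measure_lt_top _ _)).symm

lemma measurable_measureReal_mul_sq_le [SFinite μ] (hu : Measurable u) (t : ℝ) :
    Measurable fun y => μ.real {x | t * x ^ 2 ≤ u y} :=
  (measurable_measure_prodMk_right (measurableSet_mul_sq_le hu t)).ennreal_toReal

theorem hasDerivAt_measureReal_prod_mul_sq_le [IsFiniteMeasure μ] [IsFiniteMeasure ν]
    {f : ℝ → ℝ} {C t : ℝ} (hf : Continuous f) (hf_nonneg : 0 ≤ f) (hC : ∀ x, |x * f x| ≤ C)
    (hμ : μ = volume.withDensity fun x => ENNReal.ofReal (f x)) (hu : Measurable u) (ht : 0 < t) :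
    HasDerivAt (fun t => (μ.prod ν).real {p | t * p.1 ^ 2 ≤ u p.2})
      (∫ y, (f √(u y / t) + f (-√(u y / t))) * (-√(u y / t) / (2 * t)) ∂ν) t := by
  simp_rw [measureReal_prod_mul_sq_le hu]
  have slice_integrable : Integrable (fun y => μ.real {x | t * x ^ 2 ≤ u y}) ν :=
    Integrable.of_bound (measurable_measureReal_mul_sq_le hu t).aestronglyMeasurable
      (μ.real Set.univ) (Eventually.of_forall fun y => by
        rw [Real.norm_of_nonneg measureReal_nonneg]
        exact measureReal_mono (Set.subset_univ _))
  have deriv_measurable :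
      Measurable fun y => (f √(u y / t) + f (-√(u y / t))) * (-√(u y / t) / (2 * t)) := by
    have f_measurable := hf.measurable
    fun_prop
  refine (hasDerivAt_integral_of_dominated_loc_of_deriv_le
    (F' := fun t y => (f √(u y / t) + f (-√(u y / t))) * (-√(u y / t) / (2 * t)))
    (Ioi_mem_nhds (half_lt_self ht))
    (Eventually.of_forall fun b => (measurable_measureReal_mul_sq_le hu b).aestronglyMeasurable)
    slice_integrable deriv_measurable.aestronglyMeasurable
    (Eventually.of_forall fun y b hb => norm_add_neg_mul_div_le hC (half_pos ht) (le_of_lt hb) _)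
    (integrable_const _)
    (Eventually.of_forall fun y b hb => ?_)).2
  exact hasDerivAt_measureReal_mul_sq_le hf hf_nonneg hμ ((half_pos ht).trans hb) (u y)

end Product

section Gaussian

lemma continuous_gaussianPDFReal (m : ℝ) (v : ℝ≥0) : Continuous (gaussianPDFReal m v) := by
  unfold gaussianPDFReal
  fun_prop

lemma abs_mul_gaussianPDFReal_zero_le_one (v : ℝ≥0) (x : ℝ) :
    |x * gaussianPDFReal 0 v x| ≤ 1 := by
  rcases eq_or_ne v 0 with rfl | hv
  · simp
  have sq_le : x ^ 2 ≤ 2 * Real.pi * v * Real.exp (x ^ 2 / v) :=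
    calc x ^ 2 = v * (x ^ 2 / v) := by field_simp
      _ ≤ v * Real.exp (x ^ 2 / v) := by
          gcongr
          linarith [Real.add_one_le_exp (x ^ 2 / v)]
      _ ≤ 2 * Real.pi * (v * Real.exp (x ^ 2 / v)) :=
          le_mul_of_one_le_left (by positivity) (by linarith [Real.pi_gt_three])
      _ = 2 * Real.pi * v * Real.exp (x ^ 2 / v) := by ring
  rw [← sq_le_one_iff_abs_le_one, mul_pow, gaussianPDFReal, mul_pow, inv_pow,
    Real.sq_sqrt (by positivity), ← Real.exp_nat_mul]
  have exponent : ((2 : ℕ) : ℝ) * (-(x - 0) ^ 2 / (2 * v)) = -(x ^ 2 / v) := by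
    push_cast
    field_simp
    ring
  rw [exponent, Real.exp_neg, ← mul_inv, ← div_eq_mul_inv]
  exact div_le_one_of_le₀ sq_le (by positivity)

end Gaussian

instance isProbabilityMeasure_stdGaussPi (d : ℕ) : IsProbabilityMeasure (stdGaussPi d) := by
  unfold stdGaussPi
  infer_instance

lemma mixCDF_update_eq_measureReal_prod {n : ℕ} (lam : Fin (n + 1) → ℝ) (j : Fin (n + 1))
    (q t : ℝ) :
    mixCDF (n + 1) (Function.update lam j t) q =
      ((gaussianReal 0 1).prod (stdGaussPi n)).real
        {p | t * p.1 ^ 2 ≤ q - ∑ i, lam (j.succAbove i) * p.2 i ^ 2} := by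
  have split := measurePreserving_piFinSuccAbove (fun _ : Fin (n + 1) => gaussianReal 0 1) j
  have event_measurable := measurableSet_mul_sq_le
    (u := fun y : Fin n → ℝ => q - ∑ i, lam (j.succAbove i) * y i ^ 2) (by fun_prop) t
  rw [stdGaussPi, ← split.measureReal_preimage event_measurable.nullMeasurableSet, mixCDF,
    stdGaussPi, measureReal_def]
  congr 2
  ext z
  simp [Fin.sum_univ_succAbove _ j, le_sub_iff_add_le, Fin.removeNth]

theorem stmt7_general (d : ℕ) (q : ℝ) (lam : Fin d → ℝ) (j : Fin d) (hj : 0 < lam j) :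
    ∃ D : ℝ, HasDerivAt (fun t => mixCDF d (Function.update lam j t) q) D (lam j) := by
  cases d with
  | zero => exact j.elim0
  | succ n =>
    simp_rw [mixCDF_update_eq_measureReal_prod]
    have threshold_measurable : Measurable fun y : Fin n → ℝ =>
        q - ∑ i, lam (j.succAbove i) * y i ^ 2 := by fun_prop
    exact ⟨_, hasDerivAt_measureReal_prod_mul_sq_le (continuous_gaussianPDFReal 0 1)
      (gaussianPDFReal_nonneg 0 1) (abs_mul_gaussianPDFReal_zero_le_one 1)
      (gaussianReal_of_var_ne_zero 0 one_ne_zero) threshold_measurable hj⟩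

theorem stmt7 (d : ℕ) (hd : 0 < d) (q : ℝ) :
    ∀ (lam : Fin d → ℝ), (∀ i, 0 < lam i) → ∀ j : Fin d,
      ∃ D : ℝ, HasDerivAt (fun t => mixCDF d (Function.update lam j t) q) D (lam j) :=
  fun lam hlam j => stmt7_general d q lam j (hlam j)
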